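/- For every fixed integer d ≥ 2 and every ε > 0 there exists p₀ = p₀(d, ε) such that for every prime p > p₀ the Olson constant of F_p^d satisfies OL(F_p^d) ≤ (d-1+ε)p. Equivalently: for every prime p > p₀, every subset X ⊆ F_p^d with |X| ≥ (d-1+ε)p contains a nonempty subset B ⊆ X with Σ_{x∈B} x = 0. -/

import Mathlib

open Finset MvPolynomial in
/-- The coefficient of the top monomial in a product of linear factors in separate variables. -/
theorem coeff_prod_prod_X_sub_C {ι k : Type*} [Fintype ι] [Field k] (S : ι → Finset k) :
    (∏ i, ∏ s ∈ S i, (X i - C s : MvPolynomial ι k)).coeff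
      (∑ i, Finsupp.single i #(S i)) = 1 := by
  classical
  let _ : LinearOrder ι := LinearOrder.lift' (Fintype.equivFin ι) (Fintype.equivFin ι).injective
  let m : MonomialOrder ι := MonomialOrder.lex
  have hmonic : ∀ i, m.Monic (∏ s ∈ S i, (X i - C s : MvPolynomial ι k)) := fun i =>
    MonomialOrder.Monic.prod fun s _ => m.monic_X_sub_C i s
  have hdeg : ∀ i, m.degree (∏ s ∈ S i, (X i - C s : MvPolynomial ι k)) =
      Finsupp.single i #(S i) := fun i => by
    rw [MonomialOrder.degree_prod_of_regular]
    · simp [MonomialOrder.degree_X_sub_C]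
    · intro s _
      rw [m.monic_X_sub_C i s]
      exact isRegular_one
  have h := m.coeff_prod_sum_degree (fun i => ∏ s ∈ S i, (X i - C s : MvPolynomial ι k)) univ
  simp only [hdeg] at h
  rw [h]
  exact prod_eq_one fun i _ => hmonic i

open Finset MvPolynomial in
/-- A Chevalley–Warning type statement on boxes: a linear system over `ZMod p` has a nonzero
solution in a box containing the origin as soon as the box is large enough. -/
theorem exists_ne_zero_linear_solution_in_box {ι κ : Type*} [Fintype ι] {p : ℕ} [Fact p.Prime]
    (L : Finset κ) (R : ι → Finset (ZMod p)) (hR : ∀ i, 0 ∈ R i) (b : ι → κ → ZMod p)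
    (hcard : #L * (p - 1) < ∑ i, (#(R i) - 1)) :
    ∃ r : ι → ZMod p, (∀ i, r i ∈ R i) ∧ r ≠ 0 ∧ ∀ l ∈ L, ∑ i, r i * b i l = 0 := by
  classical
  have hp : 1 < p := (Fact.out : p.Prime).one_lt
  let F : MvPolynomial ι (ZMod p) := ∏ l ∈ L, (1 - (∑ i, X i * C (b i l)) ^ (p - 1))
  let H : MvPolynomial ι (ZMod p) := ∏ i, ∏ s ∈ (R i).erase 0, (X i - C s)
  let t : ι →₀ ℕ := ∑ i, Finsupp.single i #((R i).erase 0)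
  have ht : ∀ i, t i = #(R i) - 1 := fun i => by
    simp [t, Finsupp.finsetSum_apply, Finsupp.single_apply, card_erase_of_mem (hR i)]
  have htdeg : t.degree = ∑ i, (#(R i) - 1) := by
    simp only [t, map_sum, Finsupp.degree_single, card_erase_of_mem (hR _)]
  have hHcoeff : H.coeff t = 1 := coeff_prod_prod_X_sub_C _
  have hX : ∀ i (s : ZMod p), (X i - C s : MvPolynomial ι (ZMod p)).totalDegree ≤ 1 := fun i s =>
    (totalDegree_sub_C_le _ _).trans (totalDegree_X i).le
  have hHdeg : H.totalDegree ≤ t.degree := by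
    rw [htdeg]
    refine (totalDegree_finsetProd _ _).trans (sum_le_sum fun i _ => ?_)
    refine (totalDegree_finsetProd _ _).trans ((sum_le_sum fun s _ => hX i s).trans ?_)
    simp [card_erase_of_mem (hR i)]
  have hFdeg : F.totalDegree ≤ #L * (p - 1) := by
    refine (totalDegree_finsetProd _ _).trans ((sum_le_card_nsmul _ _ (p - 1) fun l _ => ?_).trans
      (by simp))
    refine (totalDegree_sub _ _).trans ?_
    refine max_le (by simp) ((totalDegree_pow _ _).trans ?_)
    refine (Nat.mul_le_mul_left _ (totalDegree_finsetSum_le (d := 1) fun i _ => ?_)).trans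
      (by simp)
    exact (totalDegree_mul _ _).trans (by simp)
  have hHzero : eval 0 H ≠ 0 := by
    simp only [H, map_prod, map_sub, eval_X, eval_C, Pi.zero_apply, zero_sub]
    refine prod_ne_zero_iff.2 fun i _ => prod_ne_zero_iff.2 fun s hs => ?_
    exact neg_ne_zero.2 (ne_of_mem_erase hs)
  have hFzero : eval 0 F = 1 := by
    simp [F, map_prod, zero_pow (Nat.sub_ne_zero_of_lt hp)]
  let γ : ZMod p := (eval 0 H)⁻¹
  have hFcoeff : F.coeff t = 0 := coeff_eq_zero_of_totalDegree_lt (by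
    have : t.degree = ∑ i ∈ t.support, t i := rfl
    rw [← this, htdeg]; exact hFdeg.trans_lt hcard)
  have hGcoeff : (F - C γ * H).coeff t ≠ 0 := by
    rw [coeff_sub, hFcoeff, coeff_C_mul, hHcoeff, mul_one, zero_sub]
    exact neg_ne_zero.2 (inv_ne_zero hHzero)
  have hGdeg : (F - C γ * H).totalDegree = t.degree := by
    refine le_antisymm ((totalDegree_sub _ _).trans (max_le (hFdeg.trans (by omega)) ?_)) ?_
    · exact (totalDegree_mul _ _).trans (by simpa using hHdeg)
    · exact le_totalDegree (mem_support_iff.2 hGcoeff)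
  obtain ⟨r, hr, hre⟩ := combinatorial_nullstellensatz_exists_eval_nonzero _ t hGcoeff hGdeg R
    fun i => by
      rw [ht]
      exact Nat.sub_lt (card_pos.2 ⟨0, hR i⟩) one_pos
  have hr0 : r ≠ 0 := by
    rintro rfl
    exact hre (by rw [map_sub, map_mul, eval_C, hFzero, inv_mul_cancel₀ hHzero, sub_self])
  refine ⟨r, hr, hr0, fun l hl => ?_⟩
  have hHr : eval r H = 0 := by
    obtain ⟨i, hi⟩ := Function.ne_iff.1 hr0
    simp only [H, map_prod]
    refine prod_eq_zero (mem_univ i) (prod_eq_zero (mem_erase.2 ⟨hi, hr i⟩) (by simp))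
  by_contra hne
  refine hre ?_
  simp only [map_sub, map_mul, hHr, mul_zero, sub_zero, F, map_prod]
  refine prod_eq_zero hl ?_
  simp [ZMod.pow_card_sub_one_eq_one hne]

open Finset in
/-- All but few of the `p`-th roots of unity are far from `1`. -/
theorem exists_finset_roots_of_unity_near_one (p K : ℕ) (hp : 0 < p) :
    ∃ T : Finset ℂ, #T ≤ 2 * K ∧ ∀ ζ : ℂ, ζ ^ p = 1 → ζ ∉ T →
      4 * (K : ℝ) / p ≤ ‖1 - ζ‖ := by
  have hp' : (0 : ℝ) < p := by exact_mod_cast hp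
  let ω : ℂ := Complex.exp (2 * Real.pi * Complex.I / p)
  have hω : IsPrimitiveRoot ω p := Complex.isPrimitiveRoot_exp p hp.ne'
  refine ⟨(range K).image (fun k => ω ^ k) ∪ (range K).image (fun k => ω ^ (p - k)), ?_, ?_⟩
  · refine (card_union_le _ _).trans ?_
    have h1 : #((range K).image (fun k => ω ^ k)) ≤ K := card_image_le.trans (by simp)
    have h2 : #((range K).image (fun k => ω ^ (p - k))) ≤ K := card_image_le.trans (by simp)
    omega
  intro ζ hζ hT
  have : NeZero p := ⟨hp.ne'⟩
  obtain ⟨k, hk, rfl⟩ := hω.eq_pow_of_pow_eq_one hζ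
  simp only [mem_union, mem_image, mem_range, not_or, not_exists, not_and] at hT
  have hk1 : K ≤ k := by
    by_contra h
    exact hT.1 k (by omega) rfl
  have hk2 : K + k ≤ p := by
    by_contra h
    refine hT.2 (p - k) (by omega) ?_
    congr 1
    omega
  have hk1' : (K : ℝ) ≤ k := by exact_mod_cast hk1
  have hk2' : (K : ℝ) + k ≤ p := by exact_mod_cast hk2
  have hexp : ω ^ k = Complex.exp (Complex.I * ((2 * Real.pi * k / p : ℝ) : ℂ)) := by
    rw [← Complex.exp_nat_mul]
    congr 1
    push_cast
    ring
  rw [norm_sub_rev, hexp, Complex.norm_exp_I_mul_ofReal_sub_one, Real.norm_eq_abs]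
  have hx : 2 * Real.pi * k / p / 2 = Real.pi * k / p := by ring
  rw [hx, abs_mul, abs_two]
  have hsin : 2 * (K : ℝ) / p ≤ Real.sin (Real.pi * k / p) := by
    have hpi := Real.pi_pos
    rcases le_total (2 * (k : ℝ)) p with h | h
    · refine le_trans ?_ (Real.mul_le_sin (by positivity) ?_)
      · rw [div_le_iff₀ hp']
        field_simp
        linarith
      · rw [div_le_div_iff₀ hp' two_pos]
        nlinarith
    · rw [← Real.sin_pi_sub]
      have hy : Real.pi - Real.pi * k / p = Real.pi * (p - k) / p := by field_simp
      rw [hy]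
      refine le_trans ?_ (Real.mul_le_sin ?_ ?_)
      · rw [div_le_iff₀ hp']
        field_simp
        linarith
      · exact div_nonneg (mul_nonneg hpi.le (by linarith)) hp'.le
      · rw [div_le_div_iff₀ hp' two_pos]
        nlinarith
  calc 4 * (K : ℝ) / p = 2 * (2 * K / p) := by ring
    _ ≤ 2 * |Real.sin (Real.pi * k / p)| := by
      gcongr
      exact hsin.trans (le_abs_self _)

open Finset in
/-- If a nontrivial character does not concentrate on `Z`, then its sum over the progressions
`0, a, …, (t - 1) a` with `a ∈ Z` exhibits cancellation. -/
theorem norm_sum_sum_pow_le {W : Type*} [AddCommGroup W] [Finite W] {p K t N : ℕ} (hp : 0 < p)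
    (hW : ∀ x : W, p • x = 0) (hKt : p ≤ K * t) (Z : Finset W) (ψ : AddChar W ℂ)
    (hψ : ∀ ζ : ℂ, #{x ∈ Z | ψ x = ζ} ≤ N) (hN : 4 * K * N ≤ #Z) :
    ‖∑ a ∈ Z, ∑ j ∈ range t, ψ (j • a)‖ ≤ 3 / 4 * #Z * t := by
  classical
  obtain ⟨T, hT, hfar⟩ := exists_finset_roots_of_unity_near_one p K hp
  have hp' : (0 : ℝ) < p := by exact_mod_cast hp
  have hKt' : (p : ℝ) ≤ K * t := by exact_mod_cast hKt
  have hK : (0 : ℝ) < K := by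
    rcases Nat.eq_zero_or_pos K with rfl | h
    · simp at hKt; omega
    · exact_mod_cast h
  have hone : ∀ a, ∀ j : ℕ, ‖ψ a ^ j‖ = 1 := fun a j => by rw [norm_pow, ψ.norm_apply, one_pow]
  have hterm : ∀ a ∈ Z, ‖∑ j ∈ range t, ψ (j • a)‖ ≤
      t / 2 + if ψ a ∈ T then (t : ℝ) / 2 else 0 := by
    intro a _
    simp only [AddChar.map_nsmul_eq_pow]
    split_ifs with h
    · refine (norm_sum_le _ _).trans ?_
      simp only [hone, sum_const, card_range, nsmul_eq_mul, mul_one]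
      linarith
    · have h1 := hfar (ψ a) (by rw [← AddChar.map_nsmul_eq_pow, hW, AddChar.map_zero_eq_one]) h
      have h2 : ‖1 - ψ a‖ * ‖∑ j ∈ range t, ψ a ^ j‖ ≤ 2 := by
        rw [← norm_mul, mul_neg_geom_sum]
        refine (norm_sub_le _ _).trans ?_
        rw [hone, norm_one]
        norm_num
      have h3 : 4 * (K : ℝ) / p * ‖∑ j ∈ range t, ψ a ^ j‖ ≤ 2 :=
        (mul_le_mul_of_nonneg_right h1 (norm_nonneg _)).trans h2
      rw [div_mul_eq_mul_div, div_le_iff₀ hp'] at h3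
      have h4 : 4 * (K : ℝ) * ‖∑ j ∈ range t, ψ a ^ j‖ ≤ 4 * K * (t / 2) := by linarith
      have := le_of_mul_le_mul_left h4 (by positivity)
      linarith
  have hcount : #{a ∈ Z | ψ a ∈ T} ≤ 2 * K * N := by
    have : #{a ∈ Z | ψ a ∈ T} ≤ ∑ ζ ∈ T, #{a ∈ Z | ψ a = ζ} := by
      rw [card_eq_sum_card_fiberwise (f := ψ) (t := T) (by intro x; simp)]
      refine sum_le_sum fun ζ _ => card_le_card fun x => ?_
      simp +contextual
    refine this.trans ((sum_le_card_nsmul _ _ N fun ζ _ => hψ ζ).trans ?_)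
    exact Nat.mul_le_mul_right _ hT
  have hcount' : 2 * (#{a ∈ Z | ψ a ∈ T} : ℝ) ≤ #Z := by
    have : 2 * #{a ∈ Z | ψ a ∈ T} ≤ #Z := by nlinarith
    exact_mod_cast this
  refine (norm_sum_le _ _).trans ((sum_le_sum hterm).trans ?_)
  rw [sum_add_distrib, ← sum_filter, sum_const, sum_const, nsmul_eq_mul, nsmul_eq_mul]
  nlinarith [(Nat.cast_nonneg t : (0 : ℝ) ≤ t)]

open Finset in
/-- Fourier expansion of the number of solutions of `g + x = y` in a finite set. -/
theorem sum_addChar_mul_norm_sq {W : Type*} [AddCommGroup W] [Fintype W] [DecidableEq W]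
    (A : Finset W) (g : W) :
    ∑ ψ : AddChar W ℂ, ((‖∑ x ∈ A, ψ x‖ ^ 2 : ℝ) : ℂ) * ψ g =
      Fintype.card W * #{x ∈ A | g + x ∈ A} := by
  have hsq : ∀ ψ : AddChar W ℂ, ((‖∑ x ∈ A, ψ x‖ ^ 2 : ℝ) : ℂ) * ψ g =
      ∑ x ∈ A, ∑ y ∈ A, ψ (g + x - y) := fun ψ => by
    rw [Complex.ofReal_pow, ← Complex.mul_conj', map_sum, sum_mul_sum, sum_mul]
    refine sum_congr rfl fun x _ => ?_
    rw [sum_mul]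
    refine sum_congr rfl fun y _ => ?_
    rw [sub_eq_add_neg, AddChar.map_add_eq_mul, AddChar.map_add_eq_mul, AddChar.map_neg_eq_conj]
    ring
  simp only [hsq]
  rw [sum_comm]
  simp_rw [sum_comm (s := (univ : Finset (AddChar W ℂ))), AddChar.sum_apply_eq_ite, sub_eq_zero]
  rw [card_filter, Nat.cast_sum, mul_sum]
  refine sum_congr rfl fun x _ => ?_
  simp

open Finset in
/-- The number of elements moved out of `A` by a translation is subadditive. -/
theorem card_filter_nsmul_add_notMem_le {W : Type*} [AddCommGroup W] [DecidableEq W]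
    (A : Finset W) (a : W) (j : ℕ) :
    #{x ∈ A | j • a + x ∉ A} ≤ j * #{x ∈ A | a + x ∉ A} := by
  induction j with
  | zero => simp
  | succ j ih =>
    have h : ({x ∈ A | (j + 1) • a + x ∉ A} : Finset W) ⊆
        ({x ∈ A | j • a + x ∉ A} : Finset W) ∪
          ({x ∈ A | a + x ∉ A} : Finset W).image (fun y => y - j • a) := by
      intro x hx
      rw [mem_filter] at hx
      rw [mem_union, mem_filter, mem_image]
      by_cases h : j • a + x ∈ A
      · refine Or.inr ⟨j • a + x, mem_filter.2 ⟨h, ?_⟩, by abel⟩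
        rw [← add_assoc, ← succ_nsmul']
        exact hx.2
      · exact Or.inl ⟨hx.1, h⟩
    refine (card_le_card h).trans ((card_union_le _ _).trans ?_)
    have := card_image_le (s := ({x ∈ A | a + x ∉ A} : Finset W)) (f := fun y => y - j • a)
    rw [add_one_mul]
    omega

open Finset in
/-- A set on which no nontrivial character concentrates contains an element which moves a
substantial part of any given set `A` out of `A`. -/
theorem exists_mem_card_le_mul_card_filter_add_notMem {W : Type*} [AddCommGroup W] [Fintype W]
    [DecidableEq W] {p K t N : ℕ} (hp : 0 < p) (hW : ∀ x : W, p • x = 0) (hKt : p ≤ K * t)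
    (Z : Finset W) (hZ : Z.Nonempty)
    (hψ : ∀ ψ : AddChar W ℂ, ψ ≠ 0 → ∀ ζ : ℂ, #{x ∈ Z | ψ x = ζ} ≤ N) (hN : 4 * K * N ≤ #Z)
    (A : Finset W) (hA : 2 * #A ≤ Fintype.card W) :
    ∃ a ∈ Z, #A ≤ 8 * t * #{x ∈ A | a + x ∉ A} := by
  let S : AddChar W ℂ → ℂ := fun ψ => ∑ a ∈ Z, ∑ j ∈ range t, ψ (j • a)
  let c : W → ℕ := fun g => #{x ∈ A | g + x ∈ A}
  have hWpos : (0 : ℝ) < Fintype.card W := by exact_mod_cast Fintype.card_pos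
  have hparseval : ∑ ψ : AddChar W ℂ, ‖∑ x ∈ A, ψ x‖ ^ 2 = Fintype.card W * (#A : ℝ) := by
    have h := sum_addChar_mul_norm_sq A 0
    simp only [AddChar.map_zero_eq_one, mul_one, zero_add, filter_mem_eq_inter, inter_self] at h
    exact_mod_cast h
  have hcount : (Fintype.card W : ℂ) * ((∑ a ∈ Z, ∑ j ∈ range t, c (j • a) : ℕ) : ℂ) =
      ∑ ψ : AddChar W ℂ, ((‖∑ x ∈ A, ψ x‖ ^ 2 : ℝ) : ℂ) * S ψ := by
    simp only [S, mul_sum, Nat.cast_sum]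
    rw [sum_comm (s := (univ : Finset (AddChar W ℂ)))]
    refine sum_congr rfl fun a _ => ?_
    rw [sum_comm (s := (univ : Finset (AddChar W ℂ)))]
    exact sum_congr rfl fun j _ => (sum_addChar_mul_norm_sq A (j • a)).symm
  have hbound : (Fintype.card W : ℝ) * ((∑ a ∈ Z, ∑ j ∈ range t, c (j • a) : ℕ) : ℝ) ≤
      ∑ ψ : AddChar W ℂ, (‖∑ x ∈ A, ψ x‖ ^ 2 * (3 / 4 * #Z * t) +
        if ψ = 0 then (#A : ℝ) ^ 2 * (1 / 4 * #Z * t) else 0) := by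
    have h := congrArg norm hcount
    rw [norm_mul, Complex.norm_natCast, Complex.norm_natCast] at h
    rw [h]
    refine (norm_sum_le _ _).trans (sum_le_sum fun ψ _ => ?_)
    rw [norm_mul, Complex.norm_real, Real.norm_of_nonneg (by positivity)]
    split_ifs with h0
    · subst h0
      have : ‖S 0‖ ≤ #Z * t := by simp [S]
      simp only [AddChar.zero_apply, sum_const, nsmul_eq_mul, mul_one, Complex.norm_natCast]
      nlinarith [sq_nonneg (#A : ℝ)]
    · rw [add_zero]
      exact mul_le_mul_of_nonneg_left (norm_sum_sum_pow_le hp hW hKt Z ψ (hψ ψ h0) hN)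
        (by positivity)
  rw [sum_add_distrib, ← sum_mul, hparseval, sum_ite_eq' univ] at hbound
  simp only [mem_univ, if_true] at hbound
  have hA' : 2 * (#A : ℝ) ≤ Fintype.card W := by exact_mod_cast hA
  have hc : 8 * ((∑ a ∈ Z, ∑ j ∈ range t, c (j • a) : ℕ) : ℝ) ≤ 7 * (#Z * t * #A) := by
    have h0 : (0 : ℝ) ≤ #Z * t * #A := by positivity
    have : (Fintype.card W : ℝ) * (8 * ((∑ a ∈ Z, ∑ j ∈ range t, c (j • a) : ℕ) : ℝ)) ≤
        Fintype.card W * (7 * (#Z * t * #A)) := by nlinarith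
    exact le_of_mul_le_mul_left this hWpos
  have hc' : 8 * ∑ a ∈ Z, ∑ j ∈ range t, c (j • a) ≤ 7 * (#Z * t * #A) := by exact_mod_cast hc
  have hsplit : ∀ g, c g + #{x ∈ A | g + x ∉ A} = #A := fun g =>
    card_filter_add_card_filter_not _
  have htotal : ∑ a ∈ Z, ∑ j ∈ range t, c (j • a) +
      ∑ a ∈ Z, ∑ j ∈ range t, #{x ∈ A | j • a + x ∉ A} = #Z * t * #A := by
    simp only [← sum_add_distrib, hsplit, sum_const, smul_eq_mul, card_range]
    ring
  have ht : 0 < t := by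
    rcases Nat.eq_zero_or_pos t with rfl | h
    · simp at hKt; omega
    · exact h
  have hmoved : ∑ a ∈ Z, ∑ j ∈ range t, #{x ∈ A | j • a + x ∉ A} ≤
      ∑ a ∈ Z, t * (t * #{x ∈ A | a + x ∉ A}) := by
    refine sum_le_sum fun a _ => (sum_le_card_nsmul _ _ (t * #{x ∈ A | a + x ∉ A})
      fun j hj => ?_).trans (by simp)
    exact (card_filter_nsmul_add_notMem_le A a j).trans
      (Nat.mul_le_mul_right _ (mem_range.1 hj).le)
  refine exists_le_of_sum_le hZ ?_
  rw [sum_const, smul_eq_mul]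
  have hfin : t * (#Z * #A) ≤ t * ∑ a ∈ Z, 8 * t * #{x ∈ A | a + x ∉ A} := by
    have : t * ∑ a ∈ Z, 8 * t * #{x ∈ A | a + x ∉ A} =
        8 * ∑ a ∈ Z, t * (t * #{x ∈ A | a + x ∉ A}) := by
      rw [mul_sum, mul_sum]
      exact sum_congr rfl fun a _ => by ring
    rw [this]
    nlinarith
  exact Nat.le_of_mul_le_mul_left hfin ht

open Finset in
/-- Sums of `j`-element subsets of a set on which no nontrivial character concentrates grow
exponentially with `j` until they fill more than half of the group. -/
theorem exists_subset_sums_card_ge {W : Type*} [AddCommGroup W] [Fintype W] [DecidableEq W]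
    {p K t N n : ℕ} (hp : 0 < p) (hW : ∀ x : W, p • x = 0) (hKt : p ≤ K * t) (Z : Finset W)
    (hψ : ∀ ψ : AddChar W ℂ, ψ ≠ 0 → ∀ ζ : ℂ, #{x ∈ Z | ψ x = ζ} ≤ N)
    (hN : 4 * K * N + 2 * n ≤ #Z) :
    ∀ j ≤ n, ∃ B ⊆ Z, #B = 2 * j ∧ ∃ A : Finset W,
      (∀ g ∈ A, ∃ C ⊆ B, #C = j ∧ ∑ x ∈ C, x = g) ∧
      ((1 + 1 / (8 * t : ℝ)) ^ j ≤ #A ∨ Fintype.card W < 2 * #A) := by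
  intro j
  induction j with
  | zero =>
    intro _
    exact ⟨∅, by simp, by simp, {0}, by simp, by simp⟩
  | succ j ih =>
    intro hj
    obtain ⟨B, hBZ, hB, A, hA, hcard⟩ := ih (by omega)
    have hsdiff : #(Z \ B) = #Z - 2 * j := by rw [card_sdiff_of_subset hBZ, hB]
    obtain ⟨x₀, hx₀⟩ : (Z \ B).Nonempty := card_pos.1 (by omega)
    have herase : #((Z \ B).erase x₀) = #Z - 2 * j - 1 := by rw [card_erase_of_mem hx₀, hsdiff]
    obtain ⟨x, hx, hgrow⟩ : ∃ x ∈ (Z \ B).erase x₀, Fintype.card W < 2 * #A ∨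
        #A ≤ 8 * t * #{y ∈ A | x - x₀ + y ∉ A} := by
      by_cases hbig : Fintype.card W < 2 * #A
      · obtain ⟨x, hx⟩ : ((Z \ B).erase x₀).Nonempty := card_pos.1 (by omega)
        exact ⟨x, hx, Or.inl hbig⟩
      have hcard' : #(((Z \ B).erase x₀).image (· - x₀)) = #Z - 2 * j - 1 := by
        rw [card_image_of_injective _ sub_left_injective, herase]
      obtain ⟨a, ha, hle⟩ := exists_mem_card_le_mul_card_filter_add_notMem hp hW hKt
        (((Z \ B).erase x₀).image (· - x₀)) (card_pos.1 (by omega)) (N := N) (fun ψ h0 ζ => by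
          refine le_trans ?_ (hψ ψ h0 (ζ * ψ x₀))
          rw [filter_image, card_image_of_injective _ sub_left_injective]
          refine card_le_card fun y hy => ?_
          rw [mem_filter, mem_erase, mem_sdiff] at hy
          refine mem_filter.2 ⟨hy.1.2.1, ?_⟩
          rw [← hy.2, ← AddChar.map_add_eq_mul, sub_add_cancel]) (by omega) A (by omega)
      obtain ⟨x, hx, rfl⟩ := mem_image.1 ha
      exact ⟨x, hx, Or.inr hle⟩
    rw [mem_sdiff] at hx₀
    rw [mem_erase, mem_sdiff] at hx
    have hxB : x ∉ insert x₀ B := by simp [hx.1, hx.2.2]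
    refine ⟨insert x (insert x₀ B), ?_, ?_, A.image (x₀ + ·) ∪ A.image (x + ·), ?_, ?_⟩
    · exact insert_subset hx.2.1 (insert_subset hx₀.1 hBZ)
    · rw [card_insert_of_notMem hxB, card_insert_of_notMem hx₀.2, hB]
      ring
    · intro g hg
      have hins : ∀ z, z ∉ B → z ∈ insert x (insert x₀ B) → ∀ g ∈ A,
          ∃ C ⊆ insert x (insert x₀ B), #C = j + 1 ∧ ∑ y ∈ C, y = z + g := by
        intro z hzB hz g hg
        obtain ⟨C, hCB, hC, rfl⟩ := hA g hg
        have hzC : z ∉ C := fun h => hzB (hCB h)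
        refine ⟨insert z C, insert_subset hz (hCB.trans ?_), ?_, sum_insert hzC⟩
        · exact (subset_insert _ _).trans (subset_insert _ _)
        · rw [card_insert_of_notMem hzC, hC]
      rcases mem_union.1 hg with h | h <;> obtain ⟨f, hf, rfl⟩ := mem_image.1 h
      · exact hins x₀ hx₀.2 (by simp) f hf
      · exact hins x hx.2.2 (by simp) f hf
    · have hlow : #A + #{y ∈ A | x - x₀ + y ∉ A} ≤ #(A.image (x₀ + ·) ∪ A.image (x + ·)) := by
        have hdisj : Disjoint (A.image (x₀ + ·))
            (({y ∈ A | x - x₀ + y ∉ A} : Finset W).image (x + ·)) := by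
          rw [disjoint_left]
          intro g hg hg'
          obtain ⟨y, hy, rfl⟩ := mem_image.1 hg
          obtain ⟨z, hz, hzy⟩ := mem_image.1 hg'
          refine (mem_filter.1 hz).2 ?_
          have : x - x₀ + z = y := by
            rw [sub_add_eq_add_sub, sub_eq_iff_eq_add, add_comm y]
            exact hzy
          rwa [this]
        rw [← card_image_of_injective A (add_right_injective x₀),
          ← card_image_of_injective {y ∈ A | x - x₀ + y ∉ A} (add_right_injective x),
          ← card_union_of_disjoint hdisj]
        exact card_le_card (union_subset_union_right (image_subset_image (filter_subset _ _)))
      rcases hgrow with h | h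
      · right
        omega
      rcases hcard with h' | h'
      · left
        have ht : (0 : ℝ) < t := by
          rcases Nat.eq_zero_or_pos t with rfl | h
          · simp at hKt; omega
          · exact_mod_cast h
        have h1 : (#A : ℝ) ≤ 8 * t * #{y ∈ A | x - x₀ + y ∉ A} := by exact_mod_cast h
        have h2 : (#A : ℝ) + #{y ∈ A | x - x₀ + y ∉ A} ≤
          #(A.image (x₀ + ·) ∪ A.image (x + ·)) := by exact_mod_cast hlow
        refine le_trans ?_ h2
        rw [pow_succ]
        have h3 : (#A : ℝ) * (1 / (8 * t)) ≤ #{y ∈ A | x - x₀ + y ∉ A} := by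
          rw [mul_one_div, div_le_iff₀ (by positivity)]
          linarith
        calc (1 + 1 / (8 * t : ℝ)) ^ j * (1 + 1 / (8 * t : ℝ))
            ≤ #A * (1 + 1 / (8 * t : ℝ)) := by gcongr
          _ ≤ _ := by linarith
      · right
        omega

open Finset in
/-- A large set on which no nontrivial character concentrates represents every group element as
a sum of `r` distinct elements, unless `r` is extremely close to `0` or to the size of the set. -/
theorem exists_subset_card_eq_sum_eq {W : Type*} [AddCommGroup W] [Fintype W] [DecidableEq W]
    {p K t N n : ℕ} (hp : 0 < p) (hW : ∀ x : W, p • x = 0) (hKt : p ≤ K * t) (Z : Finset W)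
    (hψ : ∀ ψ : AddChar W ℂ, ψ ≠ 0 → ∀ ζ : ℂ, #{x ∈ Z | ψ x = ζ} ≤ N)
    (hN : 4 * K * N + 4 * n ≤ #Z) (hn : (Fintype.card W : ℝ) < 2 * (1 + 1 / (8 * t : ℝ)) ^ n)
    (r : ℕ) (hr : 2 * n ≤ r) (hr' : r + 2 * n ≤ #Z) (g : W) :
    ∃ B ⊆ Z, #B = r ∧ ∑ x ∈ B, x = g := by
  have hbig : ∀ A : Finset W, (1 + 1 / (8 * t : ℝ)) ^ n ≤ #A ∨ Fintype.card W < 2 * #A →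
      Fintype.card W < 2 * #A := by
    rintro A (h | h)
    · have : (Fintype.card W : ℝ) < 2 * #A := by linarith
      exact_mod_cast this
    · exact h
  obtain ⟨B₁, hB₁Z, hB₁, A₁, hA₁, hc₁⟩ := exists_subset_sums_card_ge hp hW hKt Z hψ
    (n := n) (by omega) n le_rfl
  obtain ⟨B₂, hB₂Z, hB₂, A₂, hA₂, hc₂⟩ := exists_subset_sums_card_ge hp hW hKt (Z \ B₁)
    (N := N) (n := n) (fun ψ h0 ζ => (card_le_card (filter_subset_filter _ sdiff_subset)).trans
      (hψ ψ h0 ζ)) (by rw [card_sdiff_of_subset hB₁Z]; omega) n le_rfl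
  have hdisj : Disjoint B₁ B₂ := disjoint_sdiff.mono_right hB₂Z
  have hBZ : B₁ ∪ B₂ ⊆ Z := union_subset hB₁Z (hB₂Z.trans sdiff_subset)
  obtain ⟨D, hDZ, hD⟩ : ∃ D ⊆ Z \ (B₁ ∪ B₂), #D = r - 2 * n := by
    refine exists_subset_card_eq ?_
    rw [card_sdiff_of_subset hBZ, card_union_of_disjoint hdisj]
    omega
  obtain ⟨h, hh⟩ : (A₁ ∩ A₂.image (g - ∑ x ∈ D, x - ·)).Nonempty := by
    refine inter_nonempty_of_card_lt_card_add_card (subset_univ _) (subset_univ _) ?_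
    rw [card_image_of_injective _ sub_right_injective, card_univ]
    have := hbig _ hc₁
    have := hbig _ hc₂
    omega
  obtain ⟨hh₁, hh₂⟩ := mem_inter.1 hh
  obtain ⟨a, ha, hah⟩ := mem_image.1 hh₂
  obtain ⟨C₁, hC₁B, hC₁, hs₁⟩ := hA₁ _ hh₁
  obtain ⟨C₂, hC₂B, hC₂, hs₂⟩ := hA₂ _ ha
  have hC : Disjoint C₁ C₂ := hdisj.mono hC₁B hC₂B
  have hCD : Disjoint (C₁ ∪ C₂) D :=
    disjoint_sdiff.mono (union_subset_union hC₁B hC₂B) hDZ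
  refine ⟨C₁ ∪ C₂ ∪ D, ?_, ?_, ?_⟩
  · exact union_subset ((union_subset_union hC₁B hC₂B).trans hBZ) (hDZ.trans sdiff_subset)
  · rw [card_union_of_disjoint hCD, card_union_of_disjoint hC]
    omega
  · rw [sum_union hCD, sum_union hC, hs₁, hs₂, ← hah]
    abel

/-- Exponential growth at rate `1 + 1 / (8 t)` reaches `p ^ d` after `16 t d log p` steps. -/
theorem pow_le_one_add_one_div_pow {d p t n : ℕ} (hp : 1 ≤ p) (ht : (1 : ℝ) ≤ t)
    (hn : 16 * t * d * Real.log p ≤ n) : (p : ℝ) ^ d ≤ (1 + 1 / (8 * t : ℝ)) ^ n := by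
  have hp' : (1 : ℝ) ≤ p := by exact_mod_cast hp
  have hexp : Real.exp (1 / (8 * t + 1)) ≤ 1 + 1 / (8 * t : ℝ) := by
    have h := Real.one_sub_le_exp_neg (1 / (8 * t + 1 : ℝ))
    have h2 : (1 : ℝ) - 1 / (8 * t + 1) = (1 + 1 / (8 * t : ℝ))⁻¹ := by
      field_simp
      ring
    rw [h2, Real.exp_neg] at h
    exact (inv_le_inv₀ (by positivity) (Real.exp_pos _)).1 h
  have hlog : 0 ≤ d * Real.log p := mul_nonneg (Nat.cast_nonneg _) (Real.log_nonneg hp')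
  calc (p : ℝ) ^ d = Real.exp (d * Real.log p) := by
        rw [Real.exp_nat_mul, Real.exp_log (by linarith)]
    _ ≤ Real.exp (n * (1 / (8 * t + 1))) := by
        rw [Real.exp_le_exp, mul_one_div, le_div_iff₀ (by positivity)]
        nlinarith
    _ = Real.exp (1 / (8 * t + 1)) ^ n := Real.exp_nat_mul _ _
    _ ≤ _ := by gcongr

/-- Choice of the parameters for `exists_subset_card_eq_sum_eq` in terms of a scale `Q`. -/
theorem exists_expansion_parameters {d p : ℕ} (hd : 1 ≤ d) (hp : 3 ≤ p) {η Q : ℝ} (hη : η ≤ 1 / 8)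
    (hQ : 6 ≤ Q) (hQd : (d : ℝ) + 1 ≤ Q) (hQp : Q ^ 3 ≤ p)
    (hlog : 1122 * d * Real.log p ≤ η * Q) :
    ∃ K t n : ℕ, 0 < n ∧ p ≤ K * t ∧ 4 * K * ⌊p / Q ^ 3⌋₊ + 4 * n ≤ ⌊p / Q⌋₊ + 1 ∧
      (p : ℝ) ^ d < 2 * (1 + 1 / (8 * t : ℝ)) ^ n ∧ 2 * (n : ℝ) ≤ η * (⌊p / Q⌋₊ + 1 : ℕ) ∧
      d + 1 ≤ ⌊p / Q⌋₊ + 1 ∧ ⌊p / Q⌋₊ + 1 < p := by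
  have hd' : (1 : ℝ) ≤ d := by exact_mod_cast hd
  have hp' : (3 : ℝ) ≤ p := by exact_mod_cast hp
  have hlog1 : 1 ≤ Real.log p := by
    rw [Real.le_log_iff_exp_le (by linarith)]
    linarith [Real.exp_one_lt_d9]
  have hQ2p : Q ^ 2 ≤ p := by nlinarith [sq_nonneg Q]
  have hm : (p : ℝ) / Q ≤ (⌊p / Q⌋₊ + 1 : ℕ) := by
    push_cast
    exact (Nat.lt_floor_add_one _).le
  have hpQ : Q ^ 2 ≤ p / Q := by
    rw [le_div_iff₀ (by linarith)]
    nlinarith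
  obtain ⟨K, hKdef⟩ : ∃ K : ℕ, K = ⌊Q ^ 2 / 16⌋₊ := ⟨_, rfl⟩
  have hK1 : (K : ℝ) ≤ Q ^ 2 / 16 := hKdef ▸ Nat.floor_le (by positivity)
  have hK2 : Q ^ 2 / 32 ≤ K := by
    have : Q ^ 2 / 16 < K + 1 := hKdef ▸ Nat.lt_floor_add_one _
    nlinarith
  have hK0 : (0 : ℝ) < K := by nlinarith
  obtain ⟨t, htdef⟩ : ∃ t : ℕ, t = ⌈(p : ℝ) / K⌉₊ := ⟨_, rfl⟩
  have ht1 : (p : ℝ) / K ≤ t := htdef ▸ Nat.le_ceil _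
  have ht0 : (1 : ℝ) ≤ t := by
    have : 0 < t := htdef ▸ Nat.ceil_pos.2 (by positivity)
    exact_mod_cast this
  have ht2 : (t : ℝ) ≤ 33 * p / Q ^ 2 := by
    have h1 : (t : ℝ) < p / K + 1 := htdef ▸ Nat.ceil_lt_add_one (by positivity)
    have h2 : (p : ℝ) / K ≤ p / (Q ^ 2 / 32) := by gcongr
    have h3 : (p : ℝ) / (Q ^ 2 / 32) = 32 * (p / Q ^ 2) := by field_simp
    have h4 : 1 ≤ p / Q ^ 2 := by
      rw [le_div_iff₀ (by positivity)]
      linarith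
    have h5 : 33 * p / Q ^ 2 = 33 * (p / Q ^ 2) := by ring
    linarith
  obtain ⟨n, hndef⟩ : ∃ n : ℕ, n = ⌈16 * t * d * Real.log p⌉₊ := ⟨_, rfl⟩
  have hdl : 1 ≤ d * Real.log p := by nlinarith
  have htdl : 1 ≤ t * (d * Real.log p) := by nlinarith
  have hn1 : 16 * t * d * Real.log p ≤ n := hndef ▸ Nat.le_ceil _
  have hn2 : (n : ℝ) < 16 * t * d * Real.log p + 1 := hndef ▸ Nat.ceil_lt_add_one (by linarith)
  have hn3 : 2 * (n : ℝ) ≤ η * (p / Q) := by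
    have h1 : (n : ℝ) ≤ 17 * (t * (d * Real.log p)) := by linarith
    have h2 : t * (d * Real.log p) ≤ 33 * p / Q ^ 2 * (d * Real.log p) := by gcongr
    have h3 : 33 * p / Q ^ 2 * (d * Real.log p) = 33 * (d * Real.log p) * (p / Q ^ 2) := by ring
    have h4 : 1122 * (d * Real.log p) * (p / Q ^ 2) ≤ η * Q * (p / Q ^ 2) := by
      refine mul_le_mul_of_nonneg_right (by linarith) (by positivity)
    have h5 : η * Q * (p / Q ^ 2) = η * (p / Q) := by field_simp
    linarith
  have hη0 : 2 * (n : ℝ) ≤ η * (⌊p / Q⌋₊ + 1 : ℕ) := by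
    refine hn3.trans (mul_le_mul_of_nonneg_left hm ?_)
    refine nonneg_of_mul_nonneg_left (b := Q) ?_ (by linarith)
    linarith
  refine ⟨K, t, n, ?_, ?_, ?_, ?_, hη0, ?_, ?_⟩
  · have : (0 : ℝ) < n := by nlinarith
    exact_mod_cast this
  · rw [div_le_iff₀ hK0, mul_comm] at ht1
    exact_mod_cast ht1
  · have hN : (⌊p / Q ^ 3⌋₊ : ℝ) ≤ p / Q ^ 3 := Nat.floor_le (by positivity)
    have h1 : 4 * (K : ℝ) * ⌊p / Q ^ 3⌋₊ ≤ 4 * (Q ^ 2 / 16) * (p / Q ^ 3) := by gcongr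
    have h2 : 4 * (Q ^ 2 / 16) * (p / Q ^ 3) = p / Q / 4 := by
      field_simp
      norm_num
    have h3 : η * (p / Q) ≤ 1 / 8 * (p / Q) := by gcongr
    have h4 : 4 * (K : ℝ) * ⌊p / Q ^ 3⌋₊ + 4 * n ≤ (⌊p / Q⌋₊ + 1 : ℕ) := by
      have : 0 ≤ p / Q := by positivity
      linarith
    exact_mod_cast h4
  · have hpd := pow_le_one_add_one_div_pow (by omega) ht0 hn1
    have : (1 : ℝ) ≤ p ^ d := one_le_pow₀ (by linarith)
    linarith
  · have h1 : Q ≤ Q ^ 2 := by nlinarith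
    have : (d : ℝ) + 1 ≤ (⌊p / Q⌋₊ + 1 : ℕ) := by linarith
    exact_mod_cast this
  · have h1 : (⌊p / Q⌋₊ : ℝ) ≤ p / Q := Nat.floor_le (by positivity)
    have h2 : p / Q ≤ p / 6 := by gcongr
    have : (⌊p / Q⌋₊ : ℝ) + 1 < p := by linarith
    exact_mod_cast this

open Filter in
/-- A small power of a large prime beats its logarithm and every constant. -/
theorem exists_forall_log_le_rpow {β c M : ℝ} (hβ : 0 < β) (hc : 0 < c) :
    ∃ p₀ : ℕ, ∀ p : ℕ, p₀ < p →
      M ≤ (p : ℝ) ^ β ∧ Real.log p ≤ c * (p : ℝ) ^ β := by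
  have h1 : ∀ᶠ x : ℝ in atTop, M ≤ x ^ β :=
    (tendsto_rpow_atTop hβ).eventually_ge_atTop M
  have h2 : ∀ᶠ x : ℝ in atTop, Real.log x ≤ c * x ^ β := by
    filter_upwards [(isLittleO_log_rpow_atTop hβ).bound hc, eventually_ge_atTop 1] with x hx hx1
    rw [Real.norm_of_nonneg (Real.log_nonneg hx1), Real.norm_of_nonneg (by positivity)] at hx
    exact hx
  obtain ⟨p₀, hp₀⟩ := eventually_atTop.1 (tendsto_natCast_atTop_atTop.eventually (h1.and h2))
  exact ⟨p₀, fun p hp => hp₀ p hp.le⟩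

open Finset in
/-- A finite set of vectors is rich (with loss `η`) if, for most `r`, the sums of its `r`-element
subsets fill a full coset of a fixed nonzero subspace. -/
def IsRich {d p : ℕ} (η : ℝ) (Z : Finset (Fin d → ZMod p)) : Prop :=
  ∃ (a : Fin d → ZMod p) (W : Submodule (ZMod p) (Fin d → ZMod p)) (C : ℕ),
    W ≠ ⊥ ∧ d + 1 ≤ #Z ∧ #Z < p ∧ 0 < C ∧ (C : ℝ) ≤ η * #Z ∧
      ∀ r, C ≤ r → r + C ≤ #Z → ∀ g ∈ W, ∃ B ⊆ Z, #B = r ∧ ∑ x ∈ B, x = r • a + g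

/-- A level set of a nontrivial character of a subspace lies in a coset of a smaller subspace. -/
theorem exists_finrank_lt_forall_addChar_eq {p : ℕ} [Fact p.Prime] {V : Type*} [AddCommGroup V]
    [Module (ZMod p) V] [FiniteDimensional (ZMod p) V] (W : Submodule (ZMod p) V)
    (ψ : AddChar W ℂ) (hψ : ψ ≠ 0) :
    ∃ U : Submodule (ZMod p) V, Module.finrank (ZMod p) U < Module.finrank (ZMod p) W ∧
      ∀ v w : W, ψ v = ψ w → (v : V) - w ∈ U := by
  have : Finite W := Module.finite_of_finite (ZMod p)
  let H : AddSubgroup W :=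
    { carrier := {v | ψ v = 1}
      zero_mem' := ψ.map_zero_eq_one
      add_mem' := fun {v w} hv hw => by
        simp only [Set.mem_ofPred_eq] at *
        rw [ψ.map_add_eq_mul, hv, hw, one_mul]
      neg_mem' := fun {v} hv => by
        simp only [Set.mem_ofPred_eq] at *
        rw [ψ.map_neg_eq_conj, hv, map_one] }
  let U : Submodule (ZMod p) W := AddSubgroup.toZModSubmodule p H
  have hU : U ≠ ⊤ := by
    intro h
    refine hψ (DFunLike.ext _ _ fun v => ?_)
    have : v ∈ U := h ▸ Submodule.mem_top
    exact this
  refine ⟨U.map W.subtype, ?_, fun v w h => ?_⟩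
  · rw [Submodule.finrank_map_subtype_eq]
    exact Submodule.finrank_lt hU
  · refine Submodule.mem_map.2 ⟨v - w, ?_, rfl⟩
    change ψ (v - w) = 1
    rw [ψ.map_sub_eq_div, h, div_self]
    exact norm_ne_zero_iff.1 (by rw [ψ.norm_apply]; exact one_ne_zero)

open Finset in
/-- Every set which is not too small contains a rich subset. -/
theorem exists_subset_isRich {d p : ℕ} [Fact p.Prime] (hd : 1 ≤ d) (hp : 3 ≤ p) {η : ℝ}
    (hη0 : 0 ≤ η) (hη : η ≤ 1 / 8) (hβ6 : 6 ≤ (p : ℝ) ^ ((1 / 3 : ℝ) ^ d))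
    (hβd : (d : ℝ) + 1 ≤ (p : ℝ) ^ ((1 / 3 : ℝ) ^ d))
    (hlog : 1122 * d * Real.log p ≤ η * (p : ℝ) ^ ((1 / 3 : ℝ) ^ d))
    (Y : Finset (Fin d → ZMod p)) (hY : (p : ℝ) ^ (1 - (1 / 3 : ℝ) ^ d) < #Y) :
    ∃ Z ⊆ Y, IsRich η Z := by
  classical
  have hp1 : (1 : ℝ) ≤ p := by exact_mod_cast (by omega : 1 ≤ p)
  have hp0 : (0 : ℝ) < p := by linarith
  let P : ℕ → Prop := fun w => ∃ (a : Fin d → ZMod p) (W : Submodule (ZMod p) (Fin d → ZMod p)),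
    Module.finrank (ZMod p) W = w ∧
      (p : ℝ) ^ (1 - (1 / 3 : ℝ) ^ w) < #{x ∈ Y | x - a ∈ W}
  have hPd : P d := ⟨0, ⊤, by simp, by simpa using hY⟩
  have hex : ∃ w, P w := ⟨d, hPd⟩
  obtain ⟨w, hwP, hmin⟩ : ∃ w, P w ∧ ∀ v < w, ¬ P v :=
    ⟨Nat.find hex, Nat.find_spec hex, fun v hv => Nat.find_min hex hv⟩
  have hwd : w ≤ d := not_lt.1 fun h => hmin d h hPd
  obtain ⟨a, W, hWw, hcard⟩ := hwP
  have hw0 : w ≠ 0 := by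
    rintro rfl
    have hbot : W = ⊥ := Submodule.finrank_eq_zero.1 hWw
    have hle : #{x ∈ Y | x - a ∈ W} ≤ 1 := by
      refine (card_le_card (t := {a}) fun x hx => ?_).trans (by simp)
      rw [mem_filter, hbot, Submodule.mem_bot, sub_eq_zero] at hx
      simp [hx.2]
    have hle' : (#{x ∈ Y | x - a ∈ W} : ℝ) ≤ 1 := by exact_mod_cast hle
    simp only [pow_zero, sub_self, Real.rpow_zero] at hcard
    linarith
  obtain ⟨v, rfl⟩ := Nat.exists_eq_succ_of_ne_zero hw0
  have hWbot : W ≠ ⊥ := by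
    rintro rfl
    simp at hWw
  set Q : ℝ := (p : ℝ) ^ ((1 / 3 : ℝ) ^ (v + 1)) with hQdef
  have hQβ : (p : ℝ) ^ ((1 / 3 : ℝ) ^ d) ≤ Q :=
    Real.rpow_le_rpow_of_exponent_le hp1
      (pow_le_pow_of_le_one (by norm_num) (by norm_num) hwd)
  have hQ3 : Q ^ 3 = (p : ℝ) ^ ((1 / 3 : ℝ) ^ v) := by
    rw [hQdef, ← Real.rpow_natCast, ← Real.rpow_mul hp0.le]
    congr 1
    push_cast
    ring
  have hQp : Q ^ 3 ≤ p := by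
    rw [hQ3]
    refine (Real.rpow_le_rpow_of_exponent_le hp1 (pow_le_one₀ (by norm_num) (by norm_num))).trans
      (Real.rpow_one _).le
  have hpQ : (p : ℝ) ^ (1 - (1 / 3 : ℝ) ^ (v + 1)) = p / Q := by
    rw [Real.rpow_sub hp0, Real.rpow_one]
  have hpQ3 : (p : ℝ) ^ (1 - (1 / 3 : ℝ) ^ v) = p / Q ^ 3 := by
    rw [Real.rpow_sub hp0, Real.rpow_one, hQ3]
  obtain ⟨K, t, n, hn, hKt, hN, hgrow, hηn, hdm, hmp⟩ := exists_expansion_parameters (d := d) hd hp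
    (η := η) (Q := Q) hη (hβ6.trans hQβ) (hβd.trans hQβ) hQp
    (hlog.trans (mul_le_mul_of_nonneg_left hQβ hη0))
  obtain ⟨Z, hZY, hZ⟩ : ∃ Z ⊆ ({x ∈ Y | x - a ∈ W} : Finset _), #Z = ⌊p / Q⌋₊ + 1 := by
    refine exists_subset_card_eq ?_
    rw [Nat.add_one_le_iff, Nat.floor_lt (by positivity), ← hpQ]
    exact hcard
  have hZW : ∀ x ∈ Z, x - a ∈ W := fun x hx => (mem_filter.1 (hZY hx)).2
  have : Fintype W := Fintype.ofFinite _
  have hinj : Function.Injective (fun u : W => a + (u : Fin d → ZMod p)) := fun u u' h =>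
    Subtype.ext (add_right_injective a h)
  let Z' : Finset W := {u | a + (u : Fin d → ZMod p) ∈ Z}
  have hZ'Z : Z'.image (fun u : W => a + (u : Fin d → ZMod p)) = Z := by
    ext x
    simp only [mem_image, Z', mem_filter, mem_univ, true_and]
    constructor
    · rintro ⟨u, hu, rfl⟩
      exact hu
    · intro hx
      exact ⟨⟨x - a, hZW x hx⟩, by simpa using hx, by simp⟩
  have hZ' : #Z' = ⌊p / Q⌋₊ + 1 := by rw [← hZ, ← hZ'Z, card_image_of_injective _ hinj]
  have hlevel : ∀ ψ : AddChar W ℂ, ψ ≠ 0 → ∀ ζ : ℂ, #{x ∈ Z' | ψ x = ζ} ≤ ⌊p / Q ^ 3⌋₊ := by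
    intro ψ hψ ζ
    obtain ⟨U, hUW, hU⟩ := exists_finrank_lt_forall_addChar_eq W ψ hψ
    rcases ({x ∈ Z' | ψ x = ζ} : Finset W).eq_empty_or_nonempty with h | ⟨u₀, hu₀⟩
    · simp [h]
    have hsmall := hmin _ (hUW.trans_eq hWw)
    simp only [P, not_exists, not_and, not_lt] at hsmall
    have h1 := hsmall (a + u₀) U rfl
    have h2 : #{x ∈ Z' | ψ x = ζ} ≤ #{x ∈ Y | x - (a + (u₀ : Fin d → ZMod p)) ∈ U} := by
      rw [← card_image_of_injective _ hinj]
      refine card_le_card fun x hx => ?_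
      obtain ⟨u, hu, rfl⟩ := mem_image.1 hx
      rw [mem_filter] at hu hu₀
      refine mem_filter.2 ⟨(mem_filter.1 (hZY (mem_filter.1 hu.1).2)).1, ?_⟩
      rw [add_sub_add_left_eq_sub]
      exact hU _ _ (hu.2.trans hu₀.2.symm)
    refine Nat.le_floor ?_
    rw [← hpQ3]
    refine (Nat.cast_le.2 h2).trans (h1.trans ?_)
    refine Real.rpow_le_rpow_of_exponent_le hp1 ?_
    have : (1 / 3 : ℝ) ^ v ≤ (1 / 3 : ℝ) ^ Module.finrank (ZMod p) U :=
      pow_le_pow_of_le_one (by norm_num) (by norm_num) (by omega)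
    linarith
  have hcardW : (Fintype.card W : ℝ) ≤ (p : ℝ) ^ d := by
    rw [Module.card_eq_pow_finrank (K := ZMod p), ZMod.card, hWw]
    exact_mod_cast Nat.pow_le_pow_right (by omega) hwd
  refine ⟨Z, hZY.trans (filter_subset _ _), a, W, 2 * n, hWbot, by omega, by omega, by omega,
    ?_, ?_⟩
  · rw [hZ]
    push_cast at hηn ⊢
    exact hηn
  · intro r hr hr' g hg
    obtain ⟨B, hBZ, hB, hsum⟩ := exists_subset_card_eq_sum_eq (p := p) (by omega)
      (fun x => ZModModule.char_nsmul_eq_zero p x) hKt Z' hlevel (n := n) (by omega)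
      (hcardW.trans_lt hgrow) r hr (by omega) ⟨g, hg⟩
    refine ⟨B.image (fun u : W => a + (u : Fin d → ZMod p)), ?_, ?_, ?_⟩
    · rw [← hZ'Z]
      exact image_subset_image hBZ
    · rw [card_image_of_injective _ hinj, hB]
    · rw [sum_image hinj.injOn, sum_add_distrib, sum_const, hB]
      have := congrArg (Subtype.val) hsum
      simpa using this

open Finset in
/-- Greedy decomposition of a finite set into disjoint nonempty pieces of a prescribed kind. -/
theorem exists_pairwiseDisjoint_pieces {α : Type*} [DecidableEq α] (q : Finset α → Prop) (T : ℝ)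
    (hne : ∀ Z, q Z → Z.Nonempty) (hq : ∀ Y : Finset α, T < #Y → ∃ Z ⊆ Y, q Z)
    (Y : Finset α) :
    ∃ P : Finset (Finset α), (∀ Z ∈ P, Z ⊆ Y ∧ q Z) ∧ (P : Set (Finset α)).PairwiseDisjoint id ∧
      (#Y : ℝ) ≤ ((∑ Z ∈ P, #Z : ℕ) : ℝ) + T := by
  induction Y using Finset.strongInduction with
  | H Y ih =>
    rcases le_or_gt (#Y : ℝ) T with h | h
    · exact ⟨∅, by simp, by simp, by simpa using h⟩
    obtain ⟨Z, hZY, hZ⟩ := hq Y h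
    obtain ⟨P, hP, hdisj, hcard⟩ := ih (Y \ Z) (sdiff_ssubset hZY (hne Z hZ))
    have hZdisj : ∀ Z' ∈ P, Disjoint Z Z' := fun Z' hZ' =>
      disjoint_sdiff.mono_right (hP Z' hZ').1
    have hZP : Z ∉ P := fun hmem =>
      (hne Z hZ).ne_empty (disjoint_self.1 (hZdisj Z hmem))
    refine ⟨insert Z P, ?_, ?_, ?_⟩
    · intro Z' hZ'
      rcases mem_insert.1 hZ' with rfl | hZ'
      · exact ⟨hZY, hZ⟩
      · exact ⟨(hP Z' hZ').1.trans sdiff_subset, (hP Z' hZ').2⟩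
    · rw [coe_insert]
      exact hdisj.insert fun Z' hZ' _ => hZdisj Z' hZ'
    · rw [sum_insert hZP]
      have := card_sdiff_add_card_eq_card hZY
      rw [← this]
      push_cast at hcard ⊢
      linarith

/-- Fewer than `p` nonzero vectors over `ZMod p` admit a functional vanishing at none of them. -/
theorem exists_dual_forall_ne_zero_of_card_lt {p : ℕ} [Fact p.Prime] {ι V : Type*} [Fintype ι]
    [AddCommGroup V] [Module (ZMod p) V] (w : ι → V) (hw : ∀ i, w i ≠ 0)
    (hcard : Fintype.card ι < p) : ∃ f : Module.Dual (ZMod p) V, ∀ i, f (w i) ≠ 0 := by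
  have h := Submodule.iUnion_ssubset_of_forall_ne_top_of_card_lt Finset.univ
    (fun i => LinearMap.ker (Module.Dual.eval (ZMod p) V (w i)))
    (fun i htop => hw i <| (Module.forall_dual_apply_eq_zero_iff (ZMod p) (w i)).1 fun f => by
      have : f ∈ LinearMap.ker (Module.Dual.eval (ZMod p) V (w i)) := htop ▸ Submodule.mem_top
      exact this)
    (by rw [ENat.card_eq_coe_fintype_card, ZMod.card, Finset.card_univ]; exact_mod_cast hcard)
  obtain ⟨f, hf⟩ := (Set.ne_univ_iff_exists_notMem _).1 h.ne
  refine ⟨f, fun i hi => hf ?_⟩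
  simp only [Set.mem_iUnion]
  exact ⟨i, Finset.mem_univ i, hi⟩

open Finset in
/-- Disjoint rich pieces of large total size admit a nonempty zero-sum subset of their union. -/
theorem exists_zero_sum_of_isRich {d p : ℕ} [Fact p.Prime] {η : ℝ}
    {P : Finset (Finset (Fin d → ZMod p))} (hP : ∀ Z ∈ P, IsRich η Z)
    (hdisj : (P : Set (Finset (Fin d → ZMod p))).PairwiseDisjoint id) (hPne : P.Nonempty)
    (hPp : #P < p)
    (hcard : ((d : ℝ) - 1) * (p - 1) < (1 - 2 * η) * ((∑ Z ∈ P, #Z : ℕ) : ℝ)) :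
    ∃ B ⊆ P.biUnion id, B.Nonempty ∧ ∑ x ∈ B, x = 0 := by
  classical
  choose a W C hW _ hZp hC0 hCη hsum using fun Z : P => hP Z.1 Z.2
  choose w hwW hw0 using fun Z : P => Submodule.exists_mem_ne_zero_of_ne_bot (hW Z)
  obtain ⟨f, hf⟩ := exists_dual_forall_ne_zero_of_card_lt w hw0 (by simpa using hPp)
  have hfexp : ∀ v : Fin d → ZMod p, f v = ∑ l, v l * f (Pi.single l 1) := fun v => by
    conv_lhs => rw [pi_eq_sum_univ' v, map_sum]
    exact sum_congr rfl fun l _ => by rw [map_smul, smul_eq_mul]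
  obtain ⟨l₀, hl₀⟩ : ∃ l, f (Pi.single l 1) ≠ 0 := by
    by_contra! h
    obtain ⟨Z, hZ⟩ := hPne
    exact hf ⟨Z, hZ⟩ (by rw [hfexp]; simp [h])
  let b : P → Fin d → ZMod p := fun Z => a Z - (f (a Z) / f (w Z)) • w Z
  have hfb : ∀ Z, f (b Z) = 0 := fun Z => by
    simp only [b, map_sub, map_smul, smul_eq_mul]
    rw [div_mul_cancel₀ _ (hf Z), sub_self]
  let R : P → Finset (ZMod p) := fun Z =>
    (insert 0 (Icc (C Z) (#Z.1 - C Z))).image (fun k : ℕ => (k : ZMod p))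
  have hR0 : ∀ Z, 0 ∈ R Z := fun Z => mem_image.2 ⟨0, by simp, by simp⟩
  have hRcard : ∀ Z, #(R Z) = #Z.1 - C Z + 1 - C Z + 1 := fun Z => by
    have hlt : ∀ k ∈ insert 0 (Icc (C Z) (#Z.1 - C Z)), k < p := by
      intro k hk
      have := hZp Z
      rw [mem_insert, mem_Icc] at hk
      omega
    rw [card_image_of_injOn, card_insert_of_notMem, Nat.card_Icc]
    · rw [mem_Icc]
      have := hC0 Z
      omega
    · intro k hk l hl hkl
      rwa [ZMod.natCast_eq_natCast_iff', Nat.mod_eq_of_lt (hlt k hk),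
        Nat.mod_eq_of_lt (hlt l hl)] at hkl
  have hbig : #(univ.erase l₀) * (p - 1) < ∑ Z, (#(R Z) - 1) := by
    have hp1 : 1 ≤ p := (Fact.out : p.Prime).one_lt.le
    have hd1 : 1 ≤ d := Nat.one_le_iff_ne_zero.2 fun h => by subst h; exact l₀.elim0
    rw [card_erase_of_mem (mem_univ _), card_univ, Fintype.card_fin]
    have h : (((d - 1) * (p - 1) : ℕ) : ℝ) < ((∑ Z, (#(R Z) - 1) : ℕ) : ℝ) := by
      rw [Nat.cast_mul, Nat.cast_sub hd1, Nat.cast_sub hp1, Nat.cast_one]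
      refine hcard.trans_le ?_
      rw [← sum_coe_sort, Nat.cast_sum, Nat.cast_sum, mul_sum]
      refine sum_le_sum fun Z _ => ?_
      have h1 : #Z.1 ≤ (#(R Z) - 1) + 2 * C Z := by
        rw [hRcard]
        omega
      have h2 : (#Z.1 : ℝ) ≤ ((#(R Z) - 1 : ℕ) : ℝ) + 2 * C Z := by exact_mod_cast h1
      linarith [hCη Z]
    exact_mod_cast h
  obtain ⟨r, hr, hr0, hrb⟩ := exists_ne_zero_linear_solution_in_box (univ.erase l₀) R hR0 b hbig
  have hpiece : ∀ Z : P, ∃ B ⊆ Z.1, ∑ x ∈ B, x = r Z • b Z ∧ (r Z ≠ 0 → B.Nonempty) := by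
    intro Z
    obtain ⟨k, hk, hkr⟩ := mem_image.1 (hr Z)
    rcases mem_insert.1 hk with rfl | hk
    · rw [Nat.cast_zero] at hkr
      exact ⟨∅, by simp, by simp [← hkr], fun h => absurd hkr.symm h⟩
    · rw [mem_Icc] at hk
      have hC := hC0 Z
      obtain ⟨B, hBZ, hB, hBsum⟩ := hsum Z k hk.1 (by omega)
        (-((r Z * (f (a Z) / f (w Z))) • w Z)) (neg_mem (Submodule.smul_mem _ _ (hwW Z)))
      refine ⟨B, hBZ, ?_, fun _ => card_pos.1 (by omega)⟩
      rw [hBsum, ← Nat.cast_smul_eq_nsmul (ZMod p), hkr, smul_sub, smul_smul, sub_eq_add_neg]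
  choose B hBZ hBsum hBne using hpiece
  have hzero : ∑ Z, r Z • b Z = 0 := by
    have hoff : ∀ l, l ≠ l₀ → (∑ Z, r Z • b Z) l = 0 := fun l hl => by
      rw [Finset.sum_apply]
      exact hrb l (mem_erase.2 ⟨hl, mem_univ l⟩)
    have hfz : f (∑ Z, r Z • b Z) = 0 := by simp [hfb]
    rw [hfexp, sum_eq_single l₀ (fun l _ hl => by rw [hoff l hl, zero_mul]) (by simp)] at hfz
    funext l
    by_cases hl : l = l₀
    · subst hl
      exact (mul_eq_zero.1 hfz).resolve_right hl₀
    · exact hoff l hl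
  refine ⟨univ.biUnion B, ?_, ?_, ?_⟩
  · intro x hx
    obtain ⟨Z, _, hxZ⟩ := mem_biUnion.1 hx
    exact mem_biUnion.2 ⟨Z.1, Z.2, hBZ Z hxZ⟩
  · obtain ⟨Z, hZ⟩ := Function.ne_iff.1 hr0
    exact (hBne Z hZ).mono (subset_biUnion_of_mem B (mem_univ Z))
  · rw [sum_biUnion]
    · rw [← hzero]
      exact sum_congr rfl fun Z _ => hBsum Z
    · intro Z _ Z' _ hne
      exact (hdisj Z.2 Z'.2 (Subtype.coe_ne_coe.2 hne)).mono (hBZ Z) (hBZ Z')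

/-- For every fixed `d ≥ 2` and `ε > 0` there exists `p₀` such that for every
prime `p > p₀`, every subset `X ⊆ 𝔽_p^d` with `|X| ≥ (d - 1 + ε) p` contains a nonempty
subset `B` with `∑_{x ∈ B} x = 0`. -/
theorem olson_constant_bound (d : ℕ) (hd : 2 ≤ d) (ε : ℝ) (hε : 0 < ε) :
    ∃ p₀ : ℕ, ∀ p : ℕ, p.Prime → p₀ < p →
      ∀ X : Finset (Fin d → ZMod p),
        ((d : ℝ) - 1 + ε) * (p : ℝ) ≤ (X.card : ℝ) →
        ∃ B ⊆ X, B.Nonempty ∧ ∑ x ∈ B, x = 0 := by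
  classical
  wlog hε1 : ε ≤ 1 generalizing ε
  · obtain ⟨p₀, h⟩ := this 1 one_pos le_rfl
    refine ⟨p₀, fun p hp hpp X hX => h p hp hpp X (le_trans ?_ hX)⟩
    gcongr
    linarith
  have hd' : (2 : ℝ) ≤ d := by exact_mod_cast hd
  obtain ⟨η, hηdef⟩ : ∃ η : ℝ, η = ε / (8 * d) := ⟨_, rfl⟩
  have hη0 : 0 < η := by rw [hηdef]; positivity
  have hηd : η * (8 * d) = ε := by rw [hηdef]; field_simp
  have hη : η ≤ 1 / 8 := by nlinarith
  obtain ⟨β, hβdef⟩ : ∃ β : ℝ, β = (1 / 3 : ℝ) ^ d := ⟨_, rfl⟩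
  have hβ : 0 < β := by rw [hβdef]; positivity
  obtain ⟨p₀, hp₀⟩ := exists_forall_log_le_rpow (M := max 6 (max (d + 1) (4 / ε)))
    (c := η / (1122 * d)) hβ (by positivity)
  refine ⟨max p₀ 3, fun p hp hpp X hX => ?_⟩
  have : Fact p.Prime := ⟨hp⟩
  obtain ⟨hM, hlog⟩ := hp₀ p ((le_max_left _ _).trans_lt hpp)
  have hp3 : 3 ≤ p := ((le_max_right _ _).trans_lt hpp).le
  have hp0 : (0 : ℝ) < p := by exact_mod_cast (by omega : 0 < p)
  obtain ⟨hM1, hM2⟩ := max_le_iff.1 hM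
  obtain ⟨hM2, hM3⟩ := max_le_iff.1 hM2
  have hlog' : 1122 * d * Real.log p ≤ η * (p : ℝ) ^ β := by
    have h := mul_le_mul_of_nonneg_left hlog (by positivity : (0 : ℝ) ≤ 1122 * d)
    have h' : 1122 * d * (η / (1122 * d) * (p : ℝ) ^ β) = η * (p : ℝ) ^ β := by field_simp
    linarith
  have hrest : (p : ℝ) ^ (1 - β) ≤ ε / 4 * p := by
    rw [Real.rpow_sub hp0, Real.rpow_one, div_le_iff₀ (by positivity)]
    rw [div_le_iff₀ hε] at hM3
    nlinarith
  rw [hβdef] at hM1 hM2 hlog' hrest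
  have hdp : ((d : ℝ) - 1 + ε) * p ≤ d * p := by
    gcongr
    linarith
  obtain ⟨Y, hYX, hY⟩ := Finset.exists_subset_card_eq (Nat.ceil_le.2 hX)
  have hY1 : ((d : ℝ) - 1 + ε) * p ≤ Y.card := by
    rw [hY]
    exact Nat.le_ceil _
  have hY2 : Y.card ≤ d * p := by
    rw [hY]
    exact Nat.ceil_le.2 (by push_cast; exact hdp)
  obtain ⟨P, hP, hdisj, hcard⟩ := exists_pairwiseDisjoint_pieces (IsRich (d := d) (p := p) η)
    ((p : ℝ) ^ (1 - (1 / 3 : ℝ) ^ d))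
    (fun Z ⟨_, _, _, _, h, _⟩ => Finset.card_pos.1 (by omega))
    (exists_subset_isRich (by omega) hp3 hη0.le hη hM1 hM2 hlog') Y
  have hPY : P.biUnion id ⊆ Y := Finset.biUnion_subset.2 fun Z hZ => (hP Z hZ).1
  have hsumY : ∑ Z ∈ P, Z.card ≤ Y.card := by
    exact (Finset.card_biUnion (t := id) hdisj).symm.le.trans (Finset.card_le_card hPY)
  have hsum : ((d : ℝ) - 1 + 3 / 4 * ε) * p ≤ ((∑ Z ∈ P, Z.card : ℕ) : ℝ) := by linarith
  have hPp : P.card < p := by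
    have h : P.card * (d + 1) ≤ ∑ Z ∈ P, Z.card := by
      rw [← smul_eq_mul]
      refine Finset.card_nsmul_le_sum _ _ _ fun Z hZ => ?_
      obtain ⟨_, _, _, _, h, _⟩ := (hP Z hZ).2
      exact h
    by_contra! hle
    nlinarith
  have hPne : P.Nonempty := by
    rw [Finset.nonempty_iff_ne_empty]
    rintro rfl
    simp only [Finset.sum_empty, Nat.cast_zero] at hsum
    nlinarith
  obtain ⟨B, hB, hBne, hB0⟩ := exists_zero_sum_of_isRich (η := η) (fun Z hZ => (hP Z hZ).2) hdisj
    hPne hPp (by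
      have h1 : (1 - 2 * η) * (((d : ℝ) - 1 + 3 / 4 * ε) * p) ≤
          (1 - 2 * η) * ((∑ Z ∈ P, Z.card : ℕ) : ℝ) :=
        mul_le_mul_of_nonneg_left hsum (by linarith)
      refine lt_of_lt_of_le ?_ h1
      have h2 : (d : ℝ) - 1 + ε / 4 ≤ (1 - 2 * η) * ((d : ℝ) - 1 + 3 / 4 * ε) := by nlinarith
      have h3 := mul_le_mul_of_nonneg_right h2 hp0.le
      nlinarith)
  exact ⟨B, hB.trans (hPY.trans hYX), hBne, hB0⟩
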